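/- Let f ∈ B_ℝ and σ ∈ Σ₀(f). Then f satisfies the sector condition at σ∞ if and only if there exist constants r, K > 0 such that |f′(σx)|/|f(σx)| ≤ K · log|f(σx)| / x for all x ≥ r. -/

import Mathlib

/-!
Formalization of: "Absence of wandering domains for functions in class B whose
singular values escape uniformly, under a thickness condition along an invariant set A."
-/

open Set Metric Filter Topology

/-- The chordal (spherical) distance between two finite points of the Riemann sphere. -/
noncomputable def sphericalDist (z w : ℂ) : ℝ :=
  2 * dist z w / (Real.sqrt (1 + ‖z‖ ^ 2) * Real.sqrt (1 + ‖w‖ ^ 2))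

/-- A transcendental entire function: entire and not a polynomial. -/
def TranscendentalEntire (f : ℂ → ℂ) : Prop :=
  Differentiable ℂ f ∧ ¬∃ p : Polynomial ℂ, ∀ z : ℂ, f z = p.eval z

/-- `S` is the set of singular values of `f`: the smallest closed set `S ⊆ ℂ` such that
`f : ℂ ∖ f⁻¹(S) → ℂ ∖ S` is a covering map. -/
def IsSingularValueSet (f : ℂ → ℂ) (S : Set ℂ) : Prop :=
  IsClosed S ∧ IsCoveringMapOn f Sᶜ ∧
    ∀ T : Set ℂ, IsClosed T → IsCoveringMapOn f Tᶜ → S ⊆ T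

/-- The Fatou set of an entire function: points having a neighbourhood on which the family of
iterates is equicontinuous with respect to the spherical metric. -/
def FatouSet (f : ℂ → ℂ) : Set ℂ :=
  {z : ℂ | ∃ N : Set ℂ, IsOpen N ∧ z ∈ N ∧
    ∀ x ∈ N, ∀ ε > (0 : ℝ), ∃ δ > (0 : ℝ), ∀ y ∈ N, dist y x < δ →
      ∀ n : ℕ, sphericalDist (f^[n] y) (f^[n] x) < ε}

/-- A wandering domain: a connected component `W` of the Fatou set whose forward images are
pairwise disjoint. -/
def IsWanderingDomain (f : ℂ → ℂ) (W : Set ℂ) : Prop :=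
  (∃ z ∈ FatouSet f, W = connectedComponentIn (FatouSet f) z) ∧
    ∀ m n : ℕ, m ≠ n → f^[m] '' W ∩ f^[n] '' W = ∅


/-- `f` satisfies the (real) sector condition at `σ∞`: for all sufficiently large `R > 0`
there are `ϑ > 0` and `R' > 0` with `|f(σx + y)| > R` whenever `x > R'` and `|y| < ϑx`. -/
def SectorCondAt (f : ℂ → ℂ) (σ : ℝ) : Prop :=
  ∃ R₀ > (0 : ℝ), ∀ R ≥ R₀, ∃ ϑ > (0 : ℝ), ∃ R' > (0 : ℝ), ∀ x : ℝ, R' < x →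
    ∀ y : ℂ, ‖y‖ < ϑ * x → R < ‖f ((σ * x : ℝ) + y)‖

/-- A nonvanishing holomorphic function on a disc has a holomorphic logarithm. -/
theorem exists_holomorphic_log_ball {g : ℂ → ℂ} {c : ℂ} {r : ℝ} (hr : 0 < r)
    (hg : DifferentiableOn ℂ g (ball c r)) (h0 : ∀ z ∈ ball c r, g z ≠ 0) :
    ∃ l : ℂ → ℂ, l c = Complex.log (g c) ∧
      (∀ z ∈ ball c r, HasDerivAt l (deriv g z / g z) z) ∧
      ∀ z ∈ ball c r, Complex.exp (l z) = g z := by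
  have hq : DifferentiableOn ℂ (fun z => deriv g z / g z) (ball c r) :=
    (hg.deriv isOpen_ball).div hg h0
  obtain ⟨l, hlc, hl⟩ := hq.isExactOn_ball.with_val_at c (Complex.log (g c))
  refine ⟨l, hlc, hl, fun z hz => ?_⟩
  have hd : ∀ w ∈ ball c r, HasDerivAt (fun w => g w * Complex.exp (-l w)) 0 w := by
    intro w hw
    have h1 := (hg.differentiableAt (isOpen_ball.mem_nhds hw)).hasDerivAt
    refine (h1.mul (hl w hw).neg.cexp).congr_deriv ?_
    have := h0 w hw
    field_simp
    ring
  have hconst := (convex_ball c r).is_const_of_fderivWithin_eq_zero (𝕜 := ℂ)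
    (f := fun w => g w * Complex.exp (-l w))
    (fun w hw => (hd w hw).differentiableAt.differentiableWithinAt)
    (fun w hw => by
      rw [fderivWithin_of_isOpen isOpen_ball hw]
      ext
      simp [(hd w hw).deriv]) hz (mem_ball_self hr)
  have hc := h0 c (mem_ball_self hr)
  simp only [hlc, Complex.exp_neg, Complex.exp_log hc, mul_inv_cancel₀ hc] at hconst
  have := Complex.exp_ne_zero (l z)
  field_simp at hconst
  exact hconst.symm

/-- If a holomorphic function omits the closed unit disc on a disc of radius `r`, its logarithmic
derivative at the centre is at most `2 log |g| / r`. -/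
theorem norm_logDeriv_le_of_one_lt_norm {g : ℂ → ℂ} {c : ℂ} {r : ℝ} (hr : 0 < r)
    (hg : DifferentiableOn ℂ g (ball c r)) (h1 : ∀ z ∈ ball c r, 1 < ‖g z‖) :
    ‖deriv g c‖ / ‖g c‖ ≤ 2 * Real.log ‖g c‖ / r := by
  have hcb := mem_ball_self (x := c) hr
  obtain ⟨l, hlc, hl, hexp⟩ := exists_holomorphic_log_ball hr hg
    (fun z hz => norm_pos_iff.1 (one_pos.trans (h1 z hz)))
  have hre : ∀ z ∈ ball c r, 0 < (l z).re := by
    intro z hz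
    have := h1 z hz
    rw [← hexp z hz, Complex.norm_exp] at this
    simpa using this
  set a := l c with ha
  have hac : a.re = Real.log ‖g c‖ := by rw [hlc, Complex.log_re]
  have ha0 : 0 < a.re := hre c hcb
  set b := (starRingEnd ℂ) a with hb
  have hne : ∀ z ∈ ball c r, l z + b ≠ 0 := by
    intro z hz h
    have := congrArg Complex.re h
    have h2 := hre z hz
    simp [hb] at this
    linarith
  have hab : a + b = ((2 * a.re : ℝ) : ℂ) := by
    rw [hb, Complex.add_conj]
  set h : ℂ → ℂ := fun z => (l z - a) / (l z + b) with hh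
  have hhc : h c = 0 := by simp [hh, ha]
  have hder : ∀ z ∈ ball c r, HasDerivAt h
      (((deriv g z / g z) * (l z + b) - (l z - a) * (deriv g z / g z)) / (l z + b) ^ 2) z :=
    fun z hz => ((hl z hz).sub_const a).div ((hl z hz).add_const b) (hne z hz)
  have hmaps : MapsTo h (ball c r) (closedBall (h c) 1) := by
    intro z hz
    rw [hhc, mem_closedBall_zero_iff, hh, norm_div]
    refine div_le_one_of_le₀ ?_ (norm_nonneg _)
    rw [← sq_le_sq₀ (norm_nonneg _) (norm_nonneg _), ← Complex.normSq_eq_norm_sq,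
      ← Complex.normSq_eq_norm_sq, Complex.normSq_apply, Complex.normSq_apply]
    simp only [hb, Complex.sub_re, Complex.sub_im, Complex.add_re, Complex.add_im,
      Complex.conj_re, Complex.conj_im]
    nlinarith [mul_pos ha0 (hre z hz)]
  have hle := Complex.norm_deriv_le_div_of_mapsTo_ball
    (fun z hz => (hder z hz).differentiableAt.differentiableWithinAt) hmaps hr
  rw [(hder c hcb).deriv, ← ha, hab, sub_self, zero_mul, sub_zero, norm_div, norm_mul, norm_pow,
    Complex.norm_real, Real.norm_of_nonneg (by positivity), norm_div] at hle
  rw [← hac]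
  have h2 : 0 < 2 * a.re := by positivity
  rw [sq, mul_div_mul_right _ _ h2.ne', div_le_iff₀ h2] at hle
  calc _ ≤ _ := hle
    _ = _ := by ring

/-- A weak form of the Koebe quarter theorem. -/
theorem ball_subset_image_of_injOn {F : ℂ → ℂ} {c : ℂ} {r : ℝ} (hr : 0 < r)
    (hF : DifferentiableOn ℂ F (ball c r)) (hinj : InjOn F (ball c r)) :
    ball (F c) (r * ‖deriv F c‖ / 24) ⊆ F '' ball c r := by
  have hcb := mem_ball_self (x := c) hr
  have hopen : ∀ s ⊆ ball c r, IsOpen s → IsOpen (F '' s) := by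
    refine ((hF.analyticOnNhd isOpen_ball).is_constant_or_isOpen
      (convex_ball c r).isPreconnected).resolve_left ?_
    rintro ⟨w, hw⟩
    have hz : c + (r / 2 : ℝ) ∈ ball c r := by
      rw [mem_ball, dist_eq_norm, add_sub_cancel_left, Complex.norm_real,
        Real.norm_of_nonneg (by positivity)]
      linarith
    have h := hinj hz hcb ((hw _ hz).trans (hw _ hcb).symm)
    have : ((r / 2 : ℝ) : ℂ) = 0 := by simpa using h
    rw [Complex.ofReal_eq_zero] at this
    linarith
  intro w hw
  by_contra hwV
  obtain ⟨a, haV, hadist⟩ := (hopen _ Subset.rfl isOpen_ball).isClosed_compl.exists_infDist_eq_dist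
    ⟨w, hwV⟩ (F c)
  have hball : ball (F c) (dist (F c) a) ⊆ F '' ball c r := by
    intro v hv
    by_contra hvV
    have := infDist_le_dist_of_mem (x := F c) (s := (F '' ball c r)ᶜ) hvV
    rw [hadist] at this
    rw [mem_ball, dist_comm] at hv
    linarith
  have haw : dist (F c) a < r * ‖deriv F c‖ / 24 := by
    rw [← hadist]
    rw [mem_ball, dist_comm] at hw
    exact (infDist_le_dist_of_mem hwV).trans_lt hw
  set b := a - F c with hb
  have hbd : dist (F c) a = ‖b‖ := by rw [dist_comm, dist_eq_norm]
  rw [hbd] at hball haw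
  have hb0 : b ≠ 0 := by
    intro h
    exact haV ⟨c, hcb, (sub_eq_zero.1 h).symm⟩
  have hbpos : 0 < ‖b‖ := norm_pos_iff.2 hb0
  obtain ⟨l, hlc, hl, hexp⟩ := exists_holomorphic_log_ball (g := fun z => (a - F z) / b) hr
    ((hF.const_sub a).div_const b)
    (fun z hz => div_ne_zero (sub_ne_zero.2 fun h => haV ⟨z, hz, h.symm⟩) hb0)
  have hQc : (a - F c) / b = 1 := div_self hb0
  have hlc0 : l c = 0 := by simpa [hQc] using hlc
  set G : ℂ → ℂ := fun z => Complex.exp (l z / 2) with hG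
  have hGc : G c = 1 := by simp [hG, hlc0]
  have hGsq : ∀ z ∈ ball c r, G z ^ 2 = (a - F z) / b := by
    intro z hz
    rw [← hexp z hz, hG, ← Complex.exp_nat_mul]
    congr 1
    push_cast
    ring
  have hGd : ∀ z ∈ ball c r, DifferentiableAt ℂ G z := fun z hz =>
    ((hl z hz).div_const 2).cexp.differentiableAt
  have hGd' : HasDerivAt G (-deriv F c / (2 * b)) c := by
    refine ((hl c hcb).div_const 2).cexp.congr_deriv ?_
    have hFd := (hF.differentiableAt (isOpen_ball.mem_nhds hcb)).hasDerivAt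
    rw [((hFd.const_sub a).div_const b).deriv, hQc, hlc0]
    simp
    field_simp
  set W : Set ℂ := {z | z ∈ ball c r ∧ ‖F z - F c‖ < ‖b‖} with hW
  have hWpre : IsPreconnected W := by
    have h := (convex_ball (F c) ‖b‖).isPreconnected.preimage_of_isOpenMap
      (f := (ball c r).domRestrict F) hinj.injective ?_ ?_
    · convert h.image Subtype.val continuous_subtype_val.continuousOn using 1
      ext z
      simp [hW, dist_eq_norm, domRestrict_apply, and_comm]
    · intro s hs
      have h := hopen (Subtype.val '' s) (by simp) (isOpen_ball.isOpenMap_subtype_val s hs)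
      rwa [image_image] at h
    · rwa [range_domRestrict]
  have hsub : ∀ z, 1 - (a - F z) / b = (F z - F c) / b := by
    intro z
    rw [← hQc, ← sub_div]
    congr 1
    ring
  have hGre : ∀ z ∈ W, 0 < (G z).re := by
    intro z hz
    have hcW : c ∈ W := ⟨hcb, by simpa using hbpos⟩
    by_contra hneg
    have hcont : ContinuousOn (fun z => (G z).re) W := fun z hz =>
      (Complex.continuous_re.continuousAt.comp (hGd z hz.1).continuousAt).continuousWithinAt
    obtain ⟨v, hv, hv0⟩ := hWpre.intermediate_value hz hcW hcont
      (show (0 : ℝ) ∈ Icc _ _ from ⟨not_lt.1 hneg, by simp [hGc]⟩)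
    have h1 : ‖1 - G v ^ 2‖ < 1 := by
      rw [hGsq v hv.1, hsub, norm_div]
      exact (div_lt_one hbpos).2 hv.2
    have h2 := (Complex.abs_re_le_norm _).trans_lt h1
    simp only at hv0
    have h3 : (1 - G v ^ 2).re = 1 + (G v).im ^ 2 := by
      simp [sq, hv0]
    rw [h3] at h2
    have := (abs_lt.1 h2).2
    nlinarith [sq_nonneg (G v).im]
  have hGfar : ∀ z ∈ ball c r, 2 / 5 ≤ ‖G z + 1‖ := by
    intro z hz
    by_contra! hlt
    have hWz : z ∈ W := by
      refine ⟨hz, ?_⟩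
      have h1 : ‖(F z - F c) / b‖ < 1 := by
        rw [← hsub, ← hGsq z hz, show 1 - G z ^ 2 = (G z + 1) * (2 - (G z + 1)) by ring, norm_mul]
        have h2 : ‖2 - (G z + 1)‖ ≤ 2 + ‖G z + 1‖ := by
          refine (norm_sub_le _ _).trans ?_
          simp
        nlinarith [norm_nonneg (G z + 1), norm_nonneg (2 - (G z + 1))]
      rwa [norm_div, div_lt_one hbpos] at h1
    have h1 := hGre z hWz
    have h2 := (Complex.re_le_norm (G z + 1)).trans_lt hlt
    simp at h2
    linarith
  have hne : ∀ z ∈ ball c r, G z + 1 ≠ 0 := fun z hz =>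
    norm_pos_iff.1 (lt_of_lt_of_le (by norm_num) (hGfar z hz))
  set P : ℂ → ℂ := fun z => (G z + 1)⁻¹ with hP
  have hPd : DifferentiableOn ℂ P (ball c r) := fun z hz =>
    (((hGd z hz).add_const 1).inv (hne z hz)).differentiableWithinAt
  have hPc : P c = 1 / 2 := by simp [hP, hGc]; norm_num
  have hPmaps : MapsTo P (ball c r) (closedBall (P c) 3) := by
    intro z hz
    rw [mem_closedBall, dist_eq_norm, hPc]
    refine (norm_sub_le _ _).trans ?_
    have h1 : ‖P z‖ ≤ 5 / 2 := by
      rw [hP, norm_inv]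
      refine (inv_anti₀ (by norm_num) (hGfar z hz)).trans ?_
      norm_num
    have h2 : ‖(1 / 2 : ℂ)‖ = 1 / 2 := by norm_num
    linarith
  have hPder : HasDerivAt P (deriv F c / (8 * b)) c := by
    refine ((hGd'.add_const 1).inv (hne c hcb)).congr_deriv ?_
    rw [hGc]
    field_simp
    ring
  have hle := Complex.norm_deriv_le_div_of_mapsTo_ball hPd hPmaps hr
  rw [hPder.deriv, norm_div, norm_mul, div_le_div_iff₀ (by simpa using hb0) hr] at hle
  norm_num at hle
  nlinarith

/-- A continuous lift of the exponential through an entire function is holomorphic. -/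
theorem differentiableOn_of_comp_eq_exp {f F : ℂ → ℂ} {U : Set ℂ} (hf : Differentiable ℂ f)
    (hU : IsOpen U) (hF : ContinuousOn F U) (hfF : ∀ ζ ∈ U, f (F ζ) = Complex.exp ζ) :
    DifferentiableOn ℂ F U := by
  intro ζ₀ hζ₀
  have hexp_ne : ∀ᶠ ζ in 𝓝[≠] ζ₀, Complex.exp ζ ≠ Complex.exp ζ₀ :=
    (Complex.hasDerivAt_exp ζ₀).eventually_ne (Complex.exp_ne_zero ζ₀)
  have hUn : ∀ᶠ ζ in 𝓝[≠] ζ₀, ζ ∈ U := nhdsWithin_le_nhds (hU.mem_nhds hζ₀)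
  have hFc : ContinuousAt F ζ₀ := hF.continuousAt (hU.mem_nhds hζ₀)
  have hF_ne : Tendsto F (𝓝[≠] ζ₀) (𝓝[≠] F ζ₀) := by
    refine tendsto_nhdsWithin_iff.2 ⟨hFc.tendsto.mono_left nhdsWithin_le_nhds, ?_⟩
    filter_upwards [hexp_ne, hUn] with ζ hζ hζU h
    rw [← hfF ζ hζU, ← hfF ζ₀ hζ₀, h] at hζ
    exact hζ rfl
  have hf' : ∀ᶠ w in 𝓝[≠] F ζ₀, deriv f w ≠ 0 := by
    have han : AnalyticOnNhd ℂ (deriv f) univ := fun z _ => (hf.analyticAt z).deriv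
    rcases (han (F ζ₀) trivial).eventually_eq_zero_or_eventually_ne_zero with h | h
    · exfalso
      have hz := han.eqOn_zero_of_preconnected_of_eventuallyEq_zero isPreconnected_univ trivial h
      have hconst := is_const_of_deriv_eq_zero hf fun z => hz (mem_univ z)
      obtain ⟨ζ, hζ, hζU⟩ := (hexp_ne.and hUn).exists
      exact hζ (by rw [← hfF ζ hζU, ← hfF ζ₀ hζ₀, hconst (F ζ) (F ζ₀)])
    · exact h
  refine (Complex.analyticAt_of_differentiable_on_punctured_nhds_of_continuousAt
    ?_ hFc).differentiableAt.differentiableWithinAt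
  filter_upwards [hF_ne.eventually hf', hUn] with ζ hζ hζU
  have hs := (hf.analyticAt (F ζ)).hasStrictDerivAt
  have hFζ : ContinuousAt F ζ := hF.continuousAt (hU.mem_nhds hζU)
  have hinv := (hs.to_localInverse hζ).hasDerivAt.differentiableAt
  rw [hfF ζ hζU] at hinv
  refine (hinv.comp ζ Complex.differentiableAt_exp).congr_of_eventuallyEq ?_
  filter_upwards [hFζ.eventually (hs.eventually_left_inverse hζ), hU.mem_nhds hζU] with η hη hηU
  rw [Function.comp_apply, ← hfF η hηU, hη]

/-- The exponential on a right half-plane lifts through a map which is a covering over the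
image; the lift is injective or periodic. -/
theorem exists_lift_exp {f : ℂ → ℂ} {s : Set ℂ} (hf : Differentiable ℂ f)
    (hcov : IsCoveringMapOn f s) {ρ : ℝ} (hs : ∀ ζ : ℂ, ρ < ζ.re → Complex.exp ζ ∈ s)
    {ζ₀ z₀ : ℂ} (hζ₀ : ρ < ζ₀.re) (hz₀ : f z₀ = Complex.exp ζ₀) :
    ∃ F : ℂ → ℂ, DifferentiableOn ℂ F {ζ | ρ < ζ.re} ∧ F ζ₀ = z₀ ∧
      (∀ ζ : ℂ, ρ < ζ.re → f (F ζ) = Complex.exp ζ) ∧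
      (InjOn F {ζ | ρ < ζ.re} ∨
        ∃ p : ℝ, 0 < p ∧ ∀ ζ : ℂ, ρ < ζ.re → F (ζ + p * Complex.I) = F ζ) := by
  set H : Set ℂ := {ζ | ρ < ζ.re} with hH
  have hHo : IsOpen H := isOpen_lt continuous_const Complex.continuous_re
  have hHconv : Convex ℝ H := convex_halfSpace_re_gt ρ
  have : ContractibleSpace H := hHconv.contractibleSpace ⟨ζ₀, hζ₀⟩
  have : LocallyPathConnectedSpace H := hHo.locallyPathConnectedSpace
  let e : C(H, ℂ) := ⟨fun ζ => Complex.exp ζ, by fun_prop⟩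
  have hlift : ∀ (a : H) (z : ℂ), f z = e a → ∃! Φ : C(H, ℂ), Φ a = z ∧ f ∘ Φ = e :=
    fun a z h => hcov.existsUnique_continuousMap_lifts e h fun a => hs a a.2
  obtain ⟨Φ, ⟨hΦ0, hΦ⟩, -⟩ := hlift ⟨ζ₀, hζ₀⟩ z₀ hz₀
  classical
  set F : ℂ → ℂ := fun ζ => if h : ζ ∈ H then Φ ⟨ζ, h⟩ else 0 with hFdef
  have hF : ∀ ζ (h : ζ ∈ H), F ζ = Φ ⟨ζ, h⟩ := fun ζ h => by simp [hFdef, h]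
  have hfF : ∀ ζ : ℂ, ρ < ζ.re → f (F ζ) = Complex.exp ζ := fun ζ h => by
    rw [hF ζ h]
    exact congrFun hΦ ⟨ζ, h⟩
  have hFc : ContinuousOn F H := by
    rw [continuousOn_iff_continuous_domRestrict]
    refine Φ.continuous.congr fun ζ => ?_
    rw [domRestrict_apply, hF ζ ζ.2]
  have htrans : ∀ (p : ℝ) (ζ : ℂ), ζ ∈ H → ζ + p * Complex.I ∈ H := fun p ζ h => by
    simpa [hH] using h
  have hper : ∀ (n : ℤ) (ζ₁ : ℂ), ζ₁ ∈ H →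
      F (ζ₁ + (2 * Real.pi * n : ℝ) * Complex.I) = F ζ₁ →
      ∀ ζ : ℂ, ρ < ζ.re → F (ζ + (2 * Real.pi * n : ℝ) * Complex.I) = F ζ := by
    intro n ζ₁ hζ₁ h ζ hζ
    set p : ℝ := 2 * Real.pi * n with hp
    let Ψ : C(H, ℂ) := ⟨fun ζ => Φ ⟨ζ + p * Complex.I, htrans p ζ ζ.2⟩, by fun_prop⟩
    have hexp : ∀ ζ : ℂ, Complex.exp (ζ + p * Complex.I) = Complex.exp ζ := fun ζ =>
      Complex.exp_eq_exp_iff_exists_int.2 ⟨n, by rw [hp]; push_cast; ring⟩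
    have hΨ : Ψ ⟨ζ₁, hζ₁⟩ = F ζ₁ ∧ f ∘ Ψ = e := by
      refine ⟨?_, ?_⟩
      · rw [← h, hF _ (htrans p ζ₁ hζ₁)]
        rfl
      · ext ζ
        exact (congrFun hΦ ⟨ζ + p * Complex.I, htrans p ζ ζ.2⟩).trans (hexp ζ)
    have hEq := (hlift ⟨ζ₁, hζ₁⟩ (F ζ₁) (hfF ζ₁ hζ₁)).unique hΨ ⟨(hF ζ₁ hζ₁).symm, hΦ⟩
    rw [hF _ (htrans p ζ hζ), hF ζ hζ]
    exact DFunLike.congr_fun hEq ⟨ζ, hζ⟩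
  refine ⟨F, differentiableOn_of_comp_eq_exp hf hHo hFc hfF, (hF ζ₀ hζ₀).trans hΦ0, hfF, ?_⟩
  by_contra! hcon
  obtain ⟨hninj, hnper⟩ := hcon
  refine hninj fun ζ₁ hζ₁ ζ₂ hζ₂ h12 => ?_
  have hex : Complex.exp ζ₁ = Complex.exp ζ₂ := by rw [← hfF ζ₁ hζ₁, ← hfF ζ₂ hζ₂, h12]
  have key : ∀ ζ₁ ∈ H, ∀ ζ₂ ∈ H, F ζ₁ = F ζ₂ → ∀ n : ℤ, 0 < n →
      ζ₁ = ζ₂ + n * (2 * Real.pi * Complex.I) → False := by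
    intro ζ₁ _ ζ₂ hζ₂ h12 n hn h
    obtain ⟨ζ, hζ, hne⟩ := hnper (2 * Real.pi * n) (by positivity)
    refine hne (hper n ζ₂ hζ₂ ?_ ζ hζ)
    rw [← h12, h]
    congr 1
    push_cast
    ring
  obtain ⟨n, hn⟩ := Complex.exp_eq_exp_iff_exists_int.1 hex
  rcases lt_trichotomy n 0 with h | h | h
  · refine (key ζ₂ hζ₂ ζ₁ hζ₁ h12.symm (-n) (by lia) ?_).elim
    rw [hn]
    push_cast
    ring
  · simpa [h] using hn
  · exact (key ζ₁ hζ₁ ζ₂ hζ₂ h12 n h hn).elim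

/-- If the lift of the exponential through `f` is periodic, then `f` is large near infinity. -/
theorem exists_lt_norm_of_periodic_lift {f F : ℂ → ℂ} {ρ p : ℝ} (hf : Differentiable ℂ f)
    (hF : DifferentiableOn ℂ F {ζ | ρ < ζ.re})
    (hfF : ∀ ζ : ℂ, ρ < ζ.re → f (F ζ) = Complex.exp ζ) (hp : 0 < p)
    (hper : ∀ ζ : ℂ, ρ < ζ.re → F (ζ + p * Complex.I) = F ζ) :
    ∃ M : ℝ, ∀ z : ℂ, M < ‖z‖ → Real.exp ρ < ‖f z‖ := by
  have hHo : IsOpen {ζ : ℂ | ρ < ζ.re} := isOpen_lt continuous_const Complex.continuous_re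
  have hopen : ∀ s ⊆ {ζ : ℂ | ρ < ζ.re}, IsOpen s → IsOpen (F '' s) := by
    refine ((hF.analyticOnNhd hHo).is_constant_or_isOpen
      (convex_halfSpace_re_gt ρ).isPreconnected).resolve_left ?_
    rintro ⟨w, hw⟩
    have h1 : ρ < ((ρ + 1 : ℝ) : ℂ).re := by simp
    have h2 : ρ < ((ρ + 2 : ℝ) : ℂ).re := by simp
    have h := congrArg norm ((hfF _ h1).symm.trans ((congrArg f ((hw _ h1).trans
      (hw _ h2).symm)).trans (hfF _ h2)))
    rw [Complex.norm_exp, Complex.norm_exp, Real.exp_eq_exp, Complex.ofReal_re,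
      Complex.ofReal_re] at h
    linarith
  have hperZ : ∀ (n : ℤ) (ζ : ℂ), ρ < ζ.re → F (ζ + (n * p : ℝ) * Complex.I) = F ζ := by
    have hN : ∀ (n : ℕ) (ζ : ℂ), ρ < ζ.re → F (ζ + (n * p : ℝ) * Complex.I) = F ζ := by
      intro n
      induction n with
      | zero => simp
      | succ n ih =>
        intro ζ hζ
        rw [← ih ζ hζ, ← hper (ζ + (n * p : ℝ) * Complex.I) (by simpa using hζ)]
        congr 1
        push_cast
        ring
    intro n ζ hζ
    obtain ⟨m, rfl | rfl⟩ := n.eq_nat_or_neg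
    · exact_mod_cast hN m ζ hζ
    · rw [← hN m (ζ + ((-(m : ℤ) : ℤ) * p : ℝ) * Complex.I) (by simpa using hζ)]
      congr 1
      push_cast
      ring
  have hstrip : ∀ ζ : ℂ, ρ < ζ.re → ∃ η : ℂ, η.re = ζ.re ∧ η.im ∈ Icc 0 p ∧ F η = F ζ := by
    intro ζ hζ
    refine ⟨ζ + ((-⌊ζ.im / p⌋ : ℤ) * p : ℝ) * Complex.I, by simp, ?_, hperZ _ ζ hζ⟩
    have h1 := Int.floor_le (ζ.im / p)
    have h2 := (Int.lt_floor_add_one (ζ.im / p)).le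
    rw [le_div_iff₀ hp] at h1
    rw [div_le_iff₀ hp] at h2
    simp only [Complex.add_im, Complex.im_ofReal_mul, Complex.I_im, mul_one]
    push_cast
    constructor <;> linarith
  have hcpt : ∀ N : ℝ, IsCompact (F '' (Icc (ρ + 1) N ×ℂ Icc 0 p)) := fun N =>
    (isCompact_Icc.reProdIm isCompact_Icc).image_of_continuousOn
      (hF.continuousOn.mono fun ζ hζ => by
        have := (Complex.mem_reProdIm.1 hζ).1.1
        simp only [mem_ofPred_eq]
        linarith)
  obtain ⟨M₀, hM₀⟩ := (hcpt (ρ + 1)).isBounded.exists_norm_le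
  set M := max M₀ 1 with hM
  refine ⟨M, ?_⟩
  set V : Set ℂ := F '' {ζ | ρ + 1 < ζ.re} with hV
  have hVsub : {ζ : ℂ | ρ + 1 < ζ.re} ⊆ {ζ : ℂ | ρ < ζ.re} := fun ζ hζ => by
    simp only [mem_ofPred_eq] at hζ ⊢
    linarith
  have hVo : IsOpen V := hopen _ hVsub (isOpen_lt continuous_const Complex.continuous_re)
  have hMpos : 0 < M := lt_of_lt_of_le one_pos (le_max_right _ _)
  have hA : IsPreconnected {z : ℂ | M < ‖z‖} := by
    have h := (convex_halfSpace_re_gt (Real.log M)).isPreconnected.image Complex.exp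
      Complex.continuous_exp.continuousOn
    convert h using 1
    ext z
    constructor
    · intro hz
      have hz0 : 0 < ‖z‖ := hMpos.trans hz
      exact ⟨Complex.log z, by simpa [Complex.log_re] using Real.log_lt_log hMpos hz,
        Complex.exp_log (norm_pos_iff.1 hz0)⟩
    · rintro ⟨ζ, hζ, rfl⟩
      simp only [mem_ofPred_eq, Complex.norm_exp] at hζ ⊢
      exact (Real.log_lt_iff_lt_exp hMpos).1 hζ
  have hAV : ({z : ℂ | M < ‖z‖} ∩ V).Nonempty := by
    obtain ⟨B, hB⟩ := ((isCompact_closedBall (0 : ℂ) M).image hf.continuous).isBounded.exists_norm_le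
    set t : ℝ := max (ρ + 2) (Real.log (max B 0 + 1)) with ht
    have ht1 : ρ + 1 < ((t : ℝ) : ℂ).re := by
      rw [Complex.ofReal_re]
      linarith [le_max_left (ρ + 2) (Real.log (max B 0 + 1))]
    refine ⟨F t, ?_, t, ht1, rfl⟩
    by_contra hle
    have h1 := hB _ ⟨F t, by simpa using hle, rfl⟩
    rw [hfF _ (hVsub ht1), Complex.norm_exp, Complex.ofReal_re] at h1
    have h2 : max B 0 + 1 ≤ Real.exp t :=
      (Real.log_le_iff_le_exp (by positivity)).1 (le_max_right _ _)
    linarith [le_max_left B 0]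
  have hclos : closure V ∩ {z : ℂ | M < ‖z‖} ⊆ V := by
    rintro z ⟨hz, hzM⟩
    set N : ℝ := Real.log (‖f z‖ + 1) with hN
    have hNe : Real.exp N = ‖f z‖ + 1 := Real.exp_log (by positivity)
    have hO : IsOpen {w : ℂ | ‖f w‖ < Real.exp N} :=
      isOpen_lt hf.continuous.norm continuous_const
    have hz' : z ∈ closure ({w : ℂ | ‖f w‖ < Real.exp N} ∩ V) :=
      hO.inter_closure ⟨by simp [hNe], hz⟩
    have hsub : {w : ℂ | ‖f w‖ < Real.exp N} ∩ V ⊆ F '' (Icc (ρ + 1) N ×ℂ Icc 0 p) := by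
      rintro _ ⟨hw, ζ, hζ, rfl⟩
      obtain ⟨η, hηre, hηim, hη⟩ := hstrip ζ (hVsub hζ)
      simp only [mem_ofPred_eq] at hw hζ
      rw [hfF ζ (hVsub hζ), Complex.norm_exp, Real.exp_lt_exp] at hw
      exact ⟨η, Complex.mem_reProdIm.2 ⟨hηre ▸ ⟨hζ.le, hw.le⟩, hηim⟩, hη⟩
    obtain ⟨ζ, hζ, rfl⟩ := closure_minimal hsub (hcpt N).isClosed hz'
    obtain ⟨hre, him⟩ := Complex.mem_reProdIm.1 hζ
    refine ⟨ζ, lt_of_le_of_ne hre.1 fun h => ?_, rfl⟩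
    have h1 := hM₀ (F ζ) ⟨ζ, Complex.mem_reProdIm.2 ⟨⟨hre.1, h.ge⟩, him⟩, rfl⟩
    exact absurd hzM (not_lt.2 (h1.trans (le_max_left _ _)))
  intro z hz
  obtain ⟨ζ, hζ, rfl⟩ := hA.subset_of_closure_inter_subset hVo hAV hclos hz
  rw [hfF ζ (hVsub hζ), Complex.norm_exp, Real.exp_lt_exp]
  exact hVsub hζ

/-- **Theorem (Statement 12).** For `f ∈ B_ℝ` and `σ ∈ Σ₀(f)`, the sector condition at `σ∞`
holds if and only if `|f'(σx)|/|f(σx)| ≤ K log|f(σx)| / x` for some `r, K > 0` and all `x ≥ r`. -/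
theorem sector_condition_iff_log_deriv
    (f : ℂ → ℂ) (S : Set ℂ)
    (hf : TranscendentalEntire f)
    (hS : IsSingularValueSet f S)
    (hSbdd : Bornology.IsBounded S)
    (hreal : f '' {z : ℂ | z.im = 0} ⊆ {z : ℂ | z.im = 0})
    (σ : ℝ) (hσ : σ = 1 ∨ σ = -1)
    (hσ₀ : Tendsto (fun x : ℝ => ‖f ((σ * x : ℝ) : ℂ)‖) atTop atTop) :
    SectorCondAt f σ ↔
      ∃ r > (0 : ℝ), ∃ K > (0 : ℝ), ∀ x : ℝ, r ≤ x →
        ‖deriv f ((σ * x : ℝ) : ℂ)‖ / ‖f ((σ * x : ℝ) : ℂ)‖ ≤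
          K * Real.log ‖f ((σ * x : ℝ) : ℂ)‖ / x := by
  have hσx : ∀ x : ℝ, 0 ≤ x → ‖((σ * x : ℝ) : ℂ)‖ = x := by
    intro x hx
    rw [Complex.norm_real, Real.norm_eq_abs, abs_mul, abs_of_nonneg hx]
    rcases hσ with rfl | rfl <;> simp
  constructor
  · rintro ⟨R₀, -, h⟩
    obtain ⟨ϑ, hϑ, R', hR', hsec⟩ := h (max R₀ 1) (le_max_left _ _)
    refine ⟨R' + 1, by positivity, 2 / ϑ, by positivity, fun x hx => ?_⟩
    have hx0 : 0 < x := by linarith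
    have hle := norm_logDeriv_le_of_one_lt_norm (c := ((σ * x : ℝ) : ℂ)) (mul_pos hϑ hx0)
      hf.1.differentiableOn fun z hz => by
        have h1 := hsec x (by linarith) (z - ((σ * x : ℝ) : ℂ)) (by rwa [← dist_eq_norm])
        rw [add_sub_cancel] at h1
        exact (le_max_right _ _).trans_lt h1
    refine hle.trans_eq ?_
    field_simp
  · rintro ⟨r, hr, K, hK, hlog⟩
    obtain ⟨B, hB⟩ := hSbdd.exists_norm_le
    refine ⟨max B 1, by positivity, fun R hR => ?_⟩
    have hR1 : 1 ≤ R := (le_max_right _ _).trans hR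
    have hRpos : 0 < R := one_pos.trans_le hR1
    have hexpR : Real.exp (Real.log R) = R := Real.exp_log hRpos
    have hlogR : 0 ≤ Real.log R := Real.log_nonneg hR1
    by_cases hinf : ∃ M : ℝ, ∀ z : ℂ, M < ‖z‖ → R < ‖f z‖
    · obtain ⟨M, hM⟩ := hinf
      refine ⟨1 / 2, by norm_num, max 1 (2 * M), by positivity, fun x hx y hy => hM _ ?_⟩
      have hx1 : 1 < x := (le_max_left _ _).trans_lt hx
      have hxM : 2 * M < x := (le_max_right _ _).trans_lt hx
      have h1 := norm_sub_le_norm_add ((σ * x : ℝ) : ℂ) y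
      rw [hσx x (by linarith)] at h1
      linarith
    · obtain ⟨X, hX⟩ := eventually_atTop.1 (hσ₀.eventually_gt_atTop (R ^ 2))
      refine ⟨1 / (48 * K), by positivity, max X r, by positivity, fun x hx y hy => ?_⟩
      have hxr : r ≤ x := (le_max_right _ _).trans hx.le
      have hx0 : 0 < x := hr.trans_le hxr
      have hfx := hX x ((le_max_left _ _).trans hx.le)
      have hle := hlog x hxr
      set c : ℂ := ((σ * x : ℝ) : ℂ) with hc
      have hfc : 0 < ‖f c‖ := (by positivity : 0 < R ^ 2).trans hfx
      have hL : 2 * Real.log R < Real.log ‖f c‖ := by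
        have h1 := Real.log_lt_log (by positivity) hfx
        rwa [Real.log_pow] at h1
      set L := Real.log ‖f c‖ with hLdef
      have hre : (Complex.log (f c)).re = L := Complex.log_re _
      have hζ₀ : Real.log R < (Complex.log (f c)).re := by
        rw [hre]
        linarith
      obtain ⟨F, hFd, hF0, hfF, hF⟩ := exists_lift_exp hf.1 hS.2.1 (ρ := Real.log R)
        (fun ζ hζ hmem => by
          have h1 := hB _ hmem
          rw [Complex.norm_exp] at h1
          have h2 := Real.exp_lt_exp.2 hζ
          linarith [(le_max_left B 1).trans hR])
        hζ₀ (Complex.exp_log (norm_pos_iff.1 hfc)).symm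
      set ζ₀ := Complex.log (f c) with hζ₀def
      have hinj : InjOn F {ζ | Real.log R < ζ.re} := hF.resolve_right fun ⟨p, hp, hper⟩ => by
        obtain ⟨M, hM⟩ := exists_lt_norm_of_periodic_lift hf.1 hFd hfF hp hper
        rw [hexpR] at hM
        exact hinf ⟨M, hM⟩
      have hHo : IsOpen {ζ : ℂ | Real.log R < ζ.re} :=
        isOpen_lt continuous_const Complex.continuous_re
      have hsub : ball ζ₀ (L - Real.log R) ⊆ {ζ : ℂ | Real.log R < ζ.re} := by
        intro ζ hζ
        rw [mem_ball, dist_comm, dist_eq_norm] at hζ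
        have h1 := (Complex.re_le_norm (ζ₀ - ζ)).trans_lt hζ
        rw [Complex.sub_re, hre] at h1
        simp only [mem_ofPred_eq]
        linarith
      have hkoebe := ball_subset_image_of_injOn (by linarith) (hFd.mono hsub) (hinj.mono hsub)
      have hchain : deriv f c * deriv F ζ₀ = f c := by
        have hFζ := (hFd.differentiableAt (hHo.mem_nhds hζ₀)).hasDerivAt
        have hfζ : HasDerivAt f (deriv f c) (F ζ₀) := hF0 ▸ (hf.1 c).hasDerivAt
        have h1 : HasDerivAt Complex.exp (deriv f c * deriv F ζ₀) ζ₀ :=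
          (hfζ.comp ζ₀ hFζ).congr_of_eventuallyEq <| by
            filter_upwards [hHo.mem_nhds hζ₀] with ζ hζ using (hfF ζ hζ).symm
        rw [h1.unique (Complex.hasDerivAt_exp ζ₀), Complex.exp_log (norm_pos_iff.1 hfc)]
      have hnorm : ‖deriv f c‖ * ‖deriv F ζ₀‖ = ‖f c‖ := by rw [← norm_mul, hchain]
      have hf' : 0 < ‖deriv f c‖ := by
        refine norm_pos_iff.2 fun h => ?_
        rw [h, norm_zero, zero_mul] at hnorm
        exact hfc.ne hnorm
      have hx_le : x ≤ K * L * ‖deriv F ζ₀‖ := by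
        rw [div_le_div_iff₀ hfc hx0, ← hnorm] at hle
        exact le_of_mul_le_mul_left (by linarith) hf'
      have hmem : c + y ∈ ball (F ζ₀) ((L - Real.log R) * ‖deriv F ζ₀‖ / 24) := by
        rw [hF0, mem_ball, dist_eq_norm, add_sub_cancel_left]
        refine hy.trans_le ?_
        have h1 : L / 2 * ‖deriv F ζ₀‖ ≤ (L - Real.log R) * ‖deriv F ζ₀‖ :=
          mul_le_mul_of_nonneg_right (by linarith) (norm_nonneg _)
        have h2 : 1 / (48 * K) * x ≤ L / 2 * ‖deriv F ζ₀‖ / 24 := by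
          rw [one_div, inv_mul_le_iff₀ (by positivity)]
          linarith
        linarith
      obtain ⟨ζ, hζ, hζy⟩ := hkoebe hmem
      rw [← hζy, hfF ζ (hsub hζ), Complex.norm_exp, ← Real.log_lt_iff_lt_exp hRpos]
      exact hsub hζ
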